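/- For every positive integer r, D_±(C_7^{2r}) ≥ 5r + 1; in particular, since D*_±(C_7^{2r}) = 4r + 1, the difference D_±(C_7^{2r}) − D*_±(C_7^{2r}) is at least r, so this difference can be made arbitrarily large. -/

import Mathlib

open Finset

/-- A sequence `g` over `G` has an `A`-weighted zero-subsum: there is a nonempty
index set `I` and weights `a i ∈ A` for `i ∈ I` with `∑ i ∈ I, a i • g i = 0`. -/
def HasWZS (A : Set ℤ) {G : Type*} [AddCommGroup G] {ℓ : ℕ} (g : Fin ℓ → G) : Prop :=
  ∃ (I : Finset (Fin ℓ)) (a : Fin ℓ → ℤ), I.Nonempty ∧ (∀ i ∈ I, a i ∈ A) ∧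
    ∑ i ∈ I, a i • g i = 0

/-- The `A`-weighted Davenport constant of `G`: the smallest `ℓ` such that every
sequence of length `ℓ` over `G` has an `A`-weighted zero-subsum. -/
noncomputable def DavW (A : Set ℤ) (G : Type*) [AddCommGroup G] : ℕ :=
  sInf {ℓ : ℕ | ∀ g : Fin ℓ → G, HasWZS A g}

/-- The plus-minus weighted Davenport constant. -/
noncomputable def Davpm (G : Type*) [AddCommGroup G] : ℕ :=
  DavW ({1, -1} : Set ℤ) G

/-- `D*₊₋(G)`: the maximum of `∑ i, ⌊log₂ m i⌋ + 1` over all ways of writing `G` as a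
direct sum of cyclic groups of orders `m 1, …, m t`. -/
noncomputable def DavStarPM (G : Type*) [AddCommGroup G] : ℕ :=
  sSup {k : ℕ | ∃ (t : ℕ) (m : Fin t → ℕ), (∀ i, 0 < m i) ∧
    Nonempty (G ≃+ (∀ i, ZMod (m i))) ∧ k = (∑ i, Nat.log 2 (m i)) + 1}

/-!
A sequence has no plus-minus weighted zero-subsum exactly when its subset sums are pairwise
distinct: the difference of two subset sums is a plus-minus weighted sum over the symmetric
difference of the two subsets. Placing sequences with this property in the summands of a direct sum
preserves it. Distinctness of the subset sums of `ℓ` elements of `C_7²` only requires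
`2 ^ ℓ ≤ 49`, which leaves room for `ℓ = 5`, and five such elements do exist. Splitting `C_7²` into
cyclic groups accounts for only `2 * ⌊log₂ 7⌋ = 4`, so each of the `r` copies of `C_7²` gains one.
-/

/-- A family is dissociated if its subset sums are pairwise distinct. This is the analogue of
`AddDissociated` for families; it expresses that there is no plus-minus weighted zero-subsum. -/
def AddDissociatedFamily {ι G : Type*} [AddCommGroup G] (g : ι → G) : Prop :=
  Function.Injective fun s : Finset ι ↦ ∑ i ∈ s, g i

section Davpm

variable {ι κ G H : Type*} [AddCommGroup G] [AddCommGroup H]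

theorem AddDissociatedFamily.comp {g : κ → G} (hg : AddDissociatedFamily g) {f : ι → κ}
    (hf : Function.Injective f) : AddDissociatedFamily (g ∘ f) := by
  intro s t hst
  refine map_injective ⟨f, hf⟩ (hg ?_)
  simpa only [sum_map, Function.Embedding.coeFn_mk, Function.comp_apply] using hst

theorem AddDissociatedFamily.map {g : ι → G} (hg : AddDissociatedFamily g) {f : G →+ H}
    (hf : Function.Injective f) : AddDissociatedFamily (f ∘ g) := by
  intro s t hst
  refine hg (hf ?_)
  simpa only [map_sum, Function.comp_apply] using hst

theorem AddDissociatedFamily.pi [DecidableEq κ] {ι : κ → Type*} {G : κ → Type*}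
    [∀ k, AddCommGroup (G k)] {g : ∀ k, ι k → G k} (hg : ∀ k, AddDissociatedFamily (g k)) :
    AddDissociatedFamily fun x : Σ k, ι k ↦ Pi.single x.1 (g x.1 x.2) := by
  have sum_single_apply (s : Finset (Σ k, ι k)) (k : κ) :
      (∑ x ∈ s, Pi.single x.1 (g x.1 x.2) : ∀ k, G k) k =
        ∑ i ∈ s.preimage (Sigma.mk k) sigma_mk_injective.injOn, g k i := by
    rw [Finset.sum_apply]
    symm
    convert sum_preimage (Sigma.mk k) s sigma_mk_injective.injOn
      (fun x ↦ (Pi.single x.1 (g x.1 x.2) : ∀ k, G k) k) ?_ using 2 with i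
    · exact (Pi.single_eq_same k _).symm
    · rintro ⟨k', i⟩ - hx
      refine Pi.single_eq_of_ne ?_ _
      rintro rfl
      exact hx ⟨i, rfl⟩
  intro s t hst
  have fiber_eq (k : κ) : s.preimage (Sigma.mk k) sigma_mk_injective.injOn =
      t.preimage (Sigma.mk k) sigma_mk_injective.injOn := by
    refine hg k ?_
    simpa only [sum_single_apply] using congrFun hst k
  ext ⟨k, i⟩
  simpa only [mem_preimage] using Finset.ext_iff.1 (fiber_eq k) i

theorem HasWZS.not_addDissociatedFamily {ℓ : ℕ} {g : Fin ℓ → G} (h : HasWZS {1, -1} g) :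
    ¬ AddDissociatedFamily g := by
  obtain ⟨I, a, ⟨j, hj⟩, ha, hsum⟩ := h
  intro hg
  have signed_sum : ∑ i ∈ I, a i • g i =
      ∑ i ∈ I with a i = 1, g i - ∑ i ∈ I with a i ≠ 1, g i := by
    rw [← sum_filter_add_sum_filter_not I (a · = 1), sub_eq_add_neg, ← sum_neg_distrib]
    congr 1 <;> refine sum_congr rfl fun i hi ↦ ?_ <;> rw [mem_filter] at hi
    · rw [hi.2, one_zsmul]
    · rw [(ha i hi.1).resolve_left hi.2, neg_one_zsmul]
  have parts_eq : {i ∈ I | a i = 1} = {i ∈ I | a i ≠ 1} :=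
    hg (sub_eq_zero.1 (signed_sum.symm.trans hsum))
  have := Finset.ext_iff.1 parts_eq j
  simp only [mem_filter, hj, true_and] at this
  exact iff_not_self this

theorem hasWZS_of_not_addDissociatedFamily {ℓ : ℕ} {g : Fin ℓ → G}
    (h : ¬ AddDissociatedFamily g) : HasWZS {1, -1} g := by
  obtain ⟨s, t, hst, hne⟩ := Function.not_injective_iff.1 h
  refine ⟨symmDiff s t, fun i ↦ if i ∈ s then 1 else -1, symmDiff_nonempty.2 hne,
    fun i _ ↦ ite_eq_or_eq _ _ _, ?_⟩
  have sum_left : ∑ i ∈ s \ t, (if i ∈ s then (1 : ℤ) else -1) • g i = ∑ i ∈ s \ t, g i :=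
    sum_congr rfl fun i hi ↦ by rw [if_pos (mem_sdiff.1 hi).1, one_zsmul]
  have sum_right : ∑ i ∈ t \ s, (if i ∈ s then (1 : ℤ) else -1) • g i = -∑ i ∈ t \ s, g i := by
    rw [← sum_neg_distrib]
    exact sum_congr rfl fun i hi ↦ by rw [if_neg (mem_sdiff.1 hi).2, neg_one_zsmul]
  rw [symmDiff_def, sup_eq_union, sum_union disjoint_sdiff_sdiff, sum_left, sum_right,
    ← sub_eq_add_neg, sum_sdiff_sub_sum_sdiff]
  exact sub_eq_zero.2 hst

theorem hasWZS_of_card_lt_two_pow [Finite G] {ℓ : ℕ} (hℓ : Nat.card G < 2 ^ ℓ) (g : Fin ℓ → G) :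
    HasWZS {1, -1} g := by
  refine hasWZS_of_not_addDissociatedFamily fun hg ↦ hℓ.not_ge ?_
  simpa using Nat.card_le_card_of_injective _ hg

theorem hasWZS_of_length_eq_davpm [Finite G] (g : Fin (Davpm G) → G) : HasWZS {1, -1} g :=
  Nat.sInf_mem (s := {ℓ | ∀ g : Fin ℓ → G, HasWZS {1, -1} g})
    ⟨Nat.card G, hasWZS_of_card_lt_two_pow Nat.lt_two_pow_self⟩ g

theorem AddDissociatedFamily.card_lt_davpm [Finite G] [Fintype ι] {g : ι → G}
    (hg : AddDissociatedFamily g) : Fintype.card ι < Davpm G := by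
  by_contra! hcard
  obtain ⟨f⟩ : Nonempty (Fin (Davpm G) ↪ ι) :=
    Function.Embedding.nonempty_of_card_le (by simpa using hcard)
  exact (hasWZS_of_length_eq_davpm (g ∘ f)).not_addDissociatedFamily (hg.comp f.injective)

theorem AddDissociatedFamily.card_mul_lt_davpm_pi [Finite G] [Fintype ι] {n : ℕ} {g : ι → Fin n → G}
    (hg : AddDissociatedFamily g) (r : ℕ) : Fintype.card ι * r < Davpm (Fin (n * r) → G) := by
  let blocks : (Fin r → Fin n → G) ≃ₗ[ℤ] (Fin (n * r) → G) :=
    (LinearEquiv.curry ℤ G (Fin r) (Fin n)).symm.trans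
      (LinearEquiv.funCongrLeft ℤ G ((Equiv.prodComm _ _).trans finProdFinEquiv).symm)
  have := ((AddDissociatedFamily.pi fun _ : Fin r ↦ hg).map
    (f := blocks.toAddEquiv.toAddMonoidHom) blocks.injective).card_lt_davpm
  simpa [mul_comm] using this

end Davpm

section DavStarPM

variable {κ : Type*}

theorem dvd_exponent_of_addEquiv_pi_zmod {G : Type*} [AddCommGroup G] {m : κ → ℕ}
    (φ : G ≃+ ∀ i, ZMod (m i)) (i : κ) : m i ∣ AddMonoid.exponent G := by
  classical
  have := AddMonoid.exponent_dvd_of_addMonoidHom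
    (φ.symm.toAddMonoidHom.comp (AddMonoidHom.single (fun i ↦ ZMod (m i)) i))
    (φ.symm.injective.comp (Pi.single_injective (M := fun i ↦ ZMod (m i)) i))
  rwa [ZMod.exponent] at this

theorem exponent_pi_zmod_dvd (ι : Type*) (p : ℕ) : AddMonoid.exponent (ι → ZMod p) ∣ p :=
  AddMonoid.exponent_dvd_of_forall_nsmul_eq_zero fun _ ↦ funext fun _ ↦ by simp

theorem sum_log_eq_mul_log_of_prod_eq_pow {p : ℕ} (hp : 1 < p) (b : ℕ) {s : Finset κ} {m : κ → ℕ}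
    (hm : ∀ i ∈ s, m i = 1 ∨ m i = p) {n : ℕ} (hprod : ∏ i ∈ s, m i = p ^ n) :
    ∑ i ∈ s, Nat.log b (m i) = n * Nat.log b p := by
  have prod_eq : ∏ i ∈ s, m i = p ^ #{i ∈ s | m i = p} := by
    rw [← prod_const, prod_filter]
    exact prod_congr rfl fun i hi ↦ by rcases hm i hi with h | h <;> simp [h]
  have sum_eq : ∑ i ∈ s, Nat.log b (m i) = #{i ∈ s | m i = p} * Nat.log b p := by
    rw [← smul_eq_mul, ← sum_const, sum_filter]
    refine sum_congr rfl fun i hi ↦ ?_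
    rcases hm i hi with h | h <;> simp [h, hp.ne]
  rw [sum_eq, Nat.pow_right_injective hp (prod_eq.symm.trans hprod)]

theorem sum_log_eq_of_addEquiv_pi_zmod [Fintype κ] {n p : ℕ} (hp : p.Prime) {m : κ → ℕ}
    (φ : (Fin n → ZMod p) ≃+ ∀ i, ZMod (m i)) (b : ℕ) :
    ∑ i, Nat.log b (m i) = n * Nat.log b p := by
  refine sum_log_eq_mul_log_of_prod_eq_pow hp.one_lt b (fun i _ ↦ (Nat.dvd_prime hp).1 ?_) ?_
  · exact (dvd_exponent_of_addEquiv_pi_zmod φ i).trans (exponent_pi_zmod_dvd _ p)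
  · simpa [Nat.card_pi] using (Nat.card_congr φ.toEquiv).symm

theorem davStarPM_pi_zmod_prime (n : ℕ) {p : ℕ} (hp : p.Prime) :
    DavStarPM (Fin n → ZMod p) = n * Nat.log 2 p + 1 := by
  refine IsGreatest.csSup_eq ⟨⟨n, fun _ ↦ p, fun _ ↦ hp.pos, ⟨.refl _⟩, by simp⟩, ?_⟩
  rintro _ ⟨t, m, -, ⟨φ⟩, rfl⟩
  rw [sum_log_eq_of_addEquiv_pi_zmod hp φ]

end DavStarPM

theorem addDissociatedFamily_zmod_seven :
    AddDissociatedFamily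
      (![![1, 0], ![0, 1], ![1, 2], ![1, 4], ![3, 1]] : Fin 5 → Fin 2 → ZMod 7) := by
  unfold AddDissociatedFamily
  decide +kernel

theorem stmt18 (r : ℕ) (hr : 0 < r) :
    5 * r + 1 ≤ Davpm (Fin (2 * r) → ZMod 7) ∧
    DavStarPM (Fin (2 * r) → ZMod 7) = 4 * r + 1 ∧
    r ≤ Davpm (Fin (2 * r) → ZMod 7) - DavStarPM (Fin (2 * r) → ZMod 7) := by
  have davpm_gt : 5 * r < Davpm (Fin (2 * r) → ZMod 7) := by
    simpa using addDissociatedFamily_zmod_seven.card_mul_lt_davpm_pi r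
  have davStarPM_eq : DavStarPM (Fin (2 * r) → ZMod 7) = 4 * r + 1 := by
    rw [davStarPM_pi_zmod_prime _ (by norm_num), show Nat.log 2 7 = 2 by norm_num]
    ring
  exact ⟨davpm_gt, davStarPM_eq, by omega⟩
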